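/- Core objective-gap inequality (proof of Proposition 3): Let (u*, v*) be a global minimizer of Ψ over ℝ^n × ℝ^m. Then Ψ_κ(u^sc, v^sc) − Ψ(u*, v*) ≤ ( ‖u^sc − u*‖_∞ + |1 − κ|·‖u^sc‖_∞ )·‖μ^sc − μ‖₁ + ( ‖v^sc − v*‖_∞ + |1 − 1/κ|·‖v^sc‖_∞ )·‖ν^sc − ν‖₁ + |1 − κ|·‖u^sc‖_∞·‖μ^sc‖₁ + |1 − 1/κ|·‖v^sc‖_∞·‖ν^sc‖₁, where ‖·‖_∞ is the sup norm and ‖·‖₁ the ℓ1 norm. -/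

import Mathlib

/-!
The objective gap splits as `(Ψ_κ - Ψ)(usc, vsc) + (Ψ(usc, vsc) - Ψ(ustar, vstar))`.
The first difference is linear, `(1 - κ) ⟨usc, μ⟩ + (1 - 1/κ) ⟨vsc, ν⟩`. The second is at most
`⟨∇Ψ(usc, vsc), (usc - ustar, vsc - vstar)⟩` by convexity of `Ψ`, and the gradient of `Ψ` at
`(usc, vsc)` is `(μsc - μ, νsc - ν)`. Hölder's inequality for the dual pair `(ℓ∞, ℓ1)`, together
with `‖μ‖₁ ≤ ‖μsc - μ‖₁ + ‖μsc‖₁`, gives the bound.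
-/

open scoped Classical

/-- Hölder's inequality between the sup norm and the `ℓ1` norm on a finite index set. -/
lemma sum_mul_le_norm_mul_sum_abs {n : ℕ} (x y : Fin n → ℝ) :
    ∑ i, x i * y i ≤ ‖x‖ * ∑ i, |y i| := by
  rw [Finset.mul_sum]
  refine Finset.sum_le_sum fun i _ => (le_abs_self _).trans ?_
  rw [abs_mul]
  exact mul_le_mul_of_nonneg_right (norm_le_pi_norm x i) (abs_nonneg _)

/-- The linear perturbation of the objective caused by scaling a marginal `p` by `t`, bounded in
terms of an approximate marginal `q`. -/
lemma scaling_term_le {n : ℕ} (t : ℝ) (x p q : Fin n → ℝ) :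
    (1 - t) * ∑ i, x i * p i
      ≤ |1 - t| * ‖x‖ * (∑ i, |q i - p i|) + |1 - t| * ‖x‖ * (∑ i, |q i|) := by
  have h := sum_mul_le_norm_mul_sum_abs ((1 - t) • x) p
  simp only [Pi.smul_apply, smul_eq_mul, norm_smul, Real.norm_eq_abs, mul_assoc] at h
  rw [← Finset.mul_sum] at h
  have h2 : ∑ i, |p i| ≤ (∑ i, |q i - p i|) + ∑ i, |q i| := by
    rw [← Finset.sum_add_distrib]
    refine Finset.sum_le_sum fun i _ => ?_
    have := abs_sub (q i) (q i - p i)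
    rw [sub_sub_cancel] at this
    linarith
  have h3 := mul_le_mul_of_nonneg_left h2 (mul_nonneg (abs_nonneg (1 - t)) (norm_nonneg x))
  linarith

/-- Tangent-line inequality for the convex map `(a, b) ↦ exp a * k * exp b`, based at `(a, b)`. -/
lemma exp_entry_sub_le {k : ℝ} (hk : 0 ≤ k) (a b a' b' : ℝ) :
    Real.exp a * k * Real.exp b - Real.exp a' * k * Real.exp b'
      ≤ (a - a') * (Real.exp a * k * Real.exp b) + (b - b') * (Real.exp a * k * Real.exp b) := by
  have h := Real.add_one_le_exp (a' - a + (b' - b))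
  have hB : 0 ≤ Real.exp a * k * Real.exp b := by positivity
  have e : Real.exp a' * k * Real.exp b'
      = Real.exp a * k * Real.exp b * Real.exp (a' - a + (b' - b)) := by
    have e1 : Real.exp a' = Real.exp a * Real.exp (a' - a) := by
      rw [← Real.exp_add]; congr 1; ring
    have e2 : Real.exp b' = Real.exp b * Real.exp (b' - b) := by
      rw [← Real.exp_add]; congr 1; ring
    rw [e1, e2, Real.exp_add]; ring
  rw [e]
  linarith [mul_le_mul_of_nonneg_left h hB]

theorem core_objective_gap_inequality
    (n m : ℕ) (hn : 0 < n) (hm : 0 < m)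
    (C : Fin n → Fin m → ℝ) (hC : ∀ i j, 0 ≤ C i j)
    (η : ℝ) (hη : 0 < η)
    (K : Fin n → Fin m → ℝ) (hK : ∀ i j, K i j = Real.exp (-(C i j) / η))
    (μ : Fin n → ℝ) (ν : Fin m → ℝ)
    (hμpos : ∀ i, 0 < μ i) (hνpos : ∀ j, 0 < ν j)
    (hμsum : ∑ i, μ i = 1) (hνsum : ∑ j, ν j = 1)
    (ε κ : ℝ) (hε : 0 < ε) (hκ : 0 < κ)
    (I : Finset (Fin n)) (hI : ∀ i, i ∈ I ↔ ε ^ 2 / κ * (∑ j, K i j) ≤ μ i)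
    (J : Finset (Fin m)) (hJ : ∀ j, j ∈ J ↔ κ * ε ^ 2 * (∑ i, K i j) ≤ ν j)
    (usc : Fin n → ℝ) (vsc : Fin m → ℝ)
    (husc_feas : ∀ i, ε / κ ≤ Real.exp (usc i))
    (hvsc_feas : ∀ j, ε * κ ≤ Real.exp (vsc j))
    (husc_out : ∀ i ∉ I, usc i = Real.log (ε / κ))
    (hvsc_out : ∀ j ∉ J, vsc j = Real.log (ε * κ))
    (hsc_min : ∀ (u : Fin n → ℝ) (v : Fin m → ℝ),
      (∀ i, ε / κ ≤ Real.exp (u i)) → (∀ j, ε * κ ≤ Real.exp (v j)) →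
      (∀ i ∉ I, u i = Real.log (ε / κ)) → (∀ j ∉ J, v j = Real.log (ε * κ)) →
      (∑ i, ∑ j, Real.exp (usc i) * K i j * Real.exp (vsc j))
          - κ * (∑ i, usc i * μ i) - (1 / κ) * (∑ j, vsc j * ν j)
        ≤ (∑ i, ∑ j, Real.exp (u i) * K i j * Real.exp (v j))
          - κ * (∑ i, u i * μ i) - (1 / κ) * (∑ j, v j * ν j))
    (μsc : Fin n → ℝ)
    (hμsc : ∀ i, μsc i = ∑ j, Real.exp (usc i) * K i j * Real.exp (vsc j))
    (νsc : Fin m → ℝ)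
    (hνsc : ∀ j, νsc j = ∑ i, Real.exp (usc i) * K i j * Real.exp (vsc j))
    (ustar : Fin n → ℝ) (vstar : Fin m → ℝ)
    (hstar_min : ∀ (u : Fin n → ℝ) (v : Fin m → ℝ),
      (∑ i, ∑ j, Real.exp (ustar i) * K i j * Real.exp (vstar j))
          - (∑ i, ustar i * μ i) - (∑ j, vstar j * ν j)
        ≤ (∑ i, ∑ j, Real.exp (u i) * K i j * Real.exp (v j))
          - (∑ i, u i * μ i) - (∑ j, v j * ν j))
    :
    ((∑ i, ∑ j, Real.exp (usc i) * K i j * Real.exp (vsc j))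
        - κ * (∑ i, usc i * μ i) - (1 / κ) * (∑ j, vsc j * ν j))
      - ((∑ i, ∑ j, Real.exp (ustar i) * K i j * Real.exp (vstar j))
        - (∑ i, ustar i * μ i) - (∑ j, vstar j * ν j))
    ≤ (‖usc - ustar‖ + |1 - κ| * ‖usc‖) * (∑ i, |μsc i - μ i|)
      + (‖vsc - vstar‖ + |1 - 1 / κ| * ‖vsc‖) * (∑ j, |νsc j - ν j|)
      + |1 - κ| * ‖usc‖ * (∑ i, |μsc i|)
      + |1 - 1 / κ| * ‖vsc‖ * (∑ j, |νsc j|) := by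
  have hconv : (∑ i, ∑ j, Real.exp (usc i) * K i j * Real.exp (vsc j))
      - (∑ i, ∑ j, Real.exp (ustar i) * K i j * Real.exp (vstar j))
      ≤ (∑ i, (usc i - ustar i) * μsc i) + ∑ j, (vsc j - vstar j) * νsc j := by
    simp only [hμsc, hνsc, Finset.mul_sum]
    rw [Finset.sum_comm (s := (Finset.univ : Finset (Fin m)))]
    simp only [← Finset.sum_sub_distrib, ← Finset.sum_add_distrib]
    refine Finset.sum_le_sum fun i _ => Finset.sum_le_sum fun j _ => ?_
    exact exp_entry_sub_le (by rw [hK]; positivity) _ _ _ _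
  have hu := sum_mul_le_norm_mul_sum_abs (usc - ustar) (fun i => μsc i - μ i)
  have hv := sum_mul_le_norm_mul_sum_abs (vsc - vstar) (fun j => νsc j - ν j)
  simp only [Pi.sub_apply, mul_sub, sub_mul, Finset.sum_sub_distrib] at hu hv hconv
  have hμ := scaling_term_le κ usc μ μsc
  have hν := scaling_term_le (1 / κ) vsc ν νsc
  linarith
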